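/- The set of all f ∈ C(ω*,ω*) that are restrictions to ω* of Stone–Čech extensions of injective maps ℕ → ℕ is dense in C_k(ω*,ω*), and every such f is a weak P-point of C_k(ω*,ω*). In particular, C_k(ω*,ω*) contains a dense set of weak P-points. -/

import Mathlib

/-- `ω*`, the Stone–Čech remainder of the natural numbers. -/
abbrev OmegaStar : Type := {x : StoneCech ℕ // x ∉ Set.range stoneCechUnit}

/-- The Stone–Čech extension `βφ : StoneCech ℕ → StoneCech ℕ` of a map `φ : ℕ → ℕ`. -/
noncomputable def betaExtend (φ : ℕ → ℕ) : StoneCech ℕ → StoneCech ℕ :=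
  stoneCechExtend (continuous_stoneCechUnit.comp continuous_of_discreteTopology (f := φ))

/-- A point `p` is a weak P-point if it is not in the closure of any countable set avoiding
`p`. -/
def IsWeakPPoint {Y : Type*} [TopologicalSpace Y] (p : Y) : Prop :=
  ∀ S : Set Y, S.Countable → p ∉ S → p ∉ closure S

/-!
Points of `ω*` are the free ultrafilters on `ℕ`, and an injection `φ : ℕ → ℕ` induces the self-map
`φ*` of `ω*` that pushes ultrafilters forward along `φ`.

Density: a neighbourhood of `f` in `C_k(ω*, ω*)` only constrains the class of `f x` modulo a finite
clopen partition of `ω*`. Both that partition and its pullback along `f` are given by finite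
colourings `τ` and `σ` of `ℕ`. A colour used infinitely often by `σ` is used infinitely often by
`τ`, so some injection `φ` satisfies `τ ∘ φ = σ` up to finitely many integers, and `φ*` lies in the
neighbourhood.

Weak P-points: let `g n ≠ φ*` for all `n`. For each `n` there are infinitely many candidates
`(E, q)`, indexed by `k : ℕ`, where `E = φ '' A` with `A ∈ x` for some point `x` of `ω*`, and
`q = g n x` omits `E`; all the sets `E` can be made pairwise disjoint. Any two selections of one
candidate for each `n` that differ almost everywhere have almost disjoint unions, so a selection can
be diagonalised such that an ultrafilter `q` containing the union of the selected sets contains one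
of them. Colouring the selected sets with three colours, such that each one differs in colour from
the one belonging to its `q`, gives three sets `B c` such that for every `n` some `c` has `E ⊆ B c`
and `B c ∉ q`. The neighbourhood of `φ*` consisting of the maps that send `(φ⁻¹ (B c))*` into
`(B c)*` for each `c` therefore contains no `g n`.
-/

open Set Filter Topology Function

section Combinatorics

variable {ι α β γ κ S : Type*}

theorem exists_injective_forall_mem [Countable ι] {C : ι → Set α} (hC : ∀ i, (C i).Infinite) :
    ∃ f : ι → α, Injective f ∧ ∀ i, f i ∈ C i := by
  classical
  obtain ⟨e, he⟩ := exists_injective_nat ι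
  choose t htC htcard using fun i => (hC i).exists_subset_card_eq (e i + 1)
  -- Hall's condition: the index `i ∈ s` with the largest code has `#s ≤ e i + 1 = #(t i)`.
  have hall (s : Finset ι) : s.card ≤ (s.biUnion t).card := by
    obtain rfl | hs := s.eq_empty_or_nonempty
    · simp
    obtain ⟨i, his, hi⟩ := s.exists_max_image e hs
    calc s.card ≤ (Finset.range (e i + 1)).card :=
          Finset.card_le_card_of_injOn e
            (fun j hj => Finset.mem_coe.2 (Finset.mem_range_succ_iff.2 (hi j hj))) he.injOn
      _ = (t i).card := by rw [Finset.card_range, htcard]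
      _ ≤ (s.biUnion t).card := Finset.card_le_card (Finset.subset_biUnion_of_mem t his)
  obtain ⟨f, hf, hft⟩ := (Finset.all_card_le_biUnion_card_iff_exists_injective t).1 hall
  exact ⟨f, hf, fun i => htC i (hft i)⟩

theorem exists_pairwise_disjoint_infinite_subset [Countable ι] {C : ι → Set α}
    (hC : ∀ i, (C i).Infinite) :
    ∃ D : ι → Set α, (∀ i, D i ⊆ C i) ∧ (∀ i, (D i).Infinite) ∧ Pairwise (Disjoint on D) := by
  obtain ⟨f, hf, hfC⟩ := exists_injective_forall_mem (C := fun p : ι × ℕ => C p.1) fun p => hC p.1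
  refine ⟨fun i => range fun n => f (i, n), fun i => range_subset_iff.2 fun n => hfC (i, n),
    fun i => infinite_range_of_injective (hf.comp (Prod.mk_right_injective i)), fun i j hij => ?_⟩
  refine disjoint_range_iff.2 fun m n h => hij ?_
  exact congrArg Prod.fst (hf h)

theorem exists_injective_comp_eventuallyEq [Countable α] [Infinite β] [Finite S]
    {σ : α → S} {τ : β → S}
    (h : ∀ s, (∃ᶠ a in cofinite, σ a = s) → ∃ᶠ b in cofinite, τ b = s) :
    ∃ φ : α → β, Injective φ ∧ τ ∘ φ =ᶠ[cofinite] σ := by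
  have hinf (a : α) : {b | (∃ᶠ a' in cofinite, σ a' = σ a) → τ b = σ a}.Infinite := by
    by_cases ha : ∃ᶠ a' in cofinite, σ a' = σ a
    · simpa only [ha, forall_const] using frequently_cofinite_iff_infinite.1 (h _ ha)
    · simpa only [ha, false_imp_iff, ofPred_true] using infinite_univ
  obtain ⟨φ, hφ, hτφ⟩ := exists_injective_forall_mem hinf
  have hrec : ∀ᶠ a in cofinite, ∀ s, σ a = s → ∃ᶠ a' in cofinite, σ a' = s := by
    refine eventually_all.2 fun s => ?_
    by_cases hs : ∃ᶠ a' in cofinite, σ a' = s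
    · exact .of_forall fun _ _ => hs
    · filter_upwards [not_frequently.1 hs] with a ha has using absurd has ha
  exact ⟨φ, hφ, hrec.mono fun a ha => hτφ a (ha _ rfl)⟩

theorem exists_forall_eventually_ne [Countable κ] [Infinite γ] (u : κ → ℕ → γ) :
    ∃ h : ℕ → γ, ∀ j, ∀ᶠ n in cofinite, h n ≠ u j n := by
  obtain ⟨e, he⟩ := exists_injective_nat κ
  have hfin (n : ℕ) : ((fun j => u j n) '' (e ⁻¹' Iic n)).Finite :=
    ((finite_Iic n).preimage he.injOn).image _
  choose h hh using fun n => (hfin n).exists_notMem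
  refine ⟨h, fun j => ?_⟩
  filter_upwards [Nat.cofinite_eq_atTop ▸ eventually_ge_atTop (e j)] with n hn heq
  exact hh n ⟨j, hn, heq.symm⟩

theorem exists_forall_iUnion_mem_imp_exists_mem [Countable κ] [Infinite γ]
    {E : ℕ × γ → Set β} (hE : Pairwise (Disjoint on E)) (q : κ → Ultrafilter β) :
    ∃ h : ℕ → γ, ∀ j, ⋃ n, E (n, h n) ∈ q j → ∃ n, E (n, h n) ∈ q j := by
  have hu (j : κ) : ∃ u : ℕ → γ, ∀ h : ℕ → γ,
      ⋃ n, E (n, h n) ∈ q j → ⋃ n, E (n, u n) ∈ q j := by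
    by_cases hj : ∃ u : ℕ → γ, ⋃ n, E (n, u n) ∈ q j
    · exact hj.imp fun u hu _ _ => hu
    · exact ⟨Classical.arbitrary _, fun h hh => absurd ⟨h, hh⟩ hj⟩
  choose u hu using hu
  obtain ⟨h, hh⟩ := exists_forall_eventually_ne u
  refine ⟨h, fun j hj => ?_⟩
  have hfin : {n | h n = u j n}.Finite := by simpa using eventually_cofinite.1 (hh j)
  have hinter : (⋃ n, E (n, h n)) ∩ (⋃ n, E (n, u j n)) ⊆
      ⋃ n ∈ {n | h n = u j n}, E (n, h n) := by
    rintro b ⟨hb, hb'⟩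
    obtain ⟨n, hn⟩ := mem_iUnion.1 hb
    obtain ⟨m, hm⟩ := mem_iUnion.1 hb'
    have heq : (n, h n) = (m, u j m) := hE.eq (not_disjoint_iff.2 ⟨b, hn, hm⟩)
    obtain ⟨rfl, hnu⟩ := Prod.mk.inj heq
    exact mem_biUnion (x := n) hnu hn
  obtain ⟨n, -, hn⟩ := (Ultrafilter.finite_biUnion_mem_iff hfin).1
    (mem_of_superset (inter_mem hj (hu j h hj)) hinter)
  exact ⟨n, hn⟩

theorem exists_fin_three_coloring_on (f : α → α) (s : Finset α) :
    ∃ c : α → Fin 3, ∀ a ∈ s, f a ∈ s → f a ≠ a → c (f a) ≠ c a := by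
  classical
  induction s using Finset.strongInduction with
  | H s ih =>
    obtain rfl | hs := s.eq_empty_or_nonempty
    · simp
    obtain ⟨b, hb, hcard⟩ := Finset.exists_card_fiber_le_of_card_le_mul (f := f) (n := 1) hs
      (mul_one s.card).ge
    obtain ⟨c, hc⟩ := ih (s.erase b) (Finset.erase_ssubset hb)
    -- The neighbours of `b` are `f b` and at most one preimage in `s`.
    obtain ⟨k, -, hk⟩ := Finset.exists_mem_notMem_of_card_lt_card <|
      calc (insert (c (f b)) ((s.filter (f · = b)).image c)).card
        _ ≤ ((s.filter (f · = b)).image c).card + 1 := Finset.card_insert_le _ _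
        _ ≤ 1 + 1 := Nat.add_le_add_right (Finset.card_image_le.trans hcard) 1
        _ < (Finset.univ : Finset (Fin 3)).card := by norm_num
    rw [Finset.mem_insert, not_or] at hk
    refine ⟨update c b k, fun a ha hfa hne => ?_⟩
    obtain rfl | hab := eq_or_ne a b
    · rw [update_self, update_of_ne hne]
      exact Ne.symm hk.1
    rw [update_of_ne hab]
    obtain rfl | hfab := eq_or_ne (f a) b
    · rw [update_self]
      rintro rfl
      exact hk.2 (Finset.mem_image_of_mem c (Finset.mem_filter.2 ⟨ha, rfl⟩))
    · rw [update_of_ne hfab]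
      exact hc a (Finset.mem_erase.2 ⟨hab, ha⟩) (Finset.mem_erase.2 ⟨hfab, hfa⟩) hne

theorem exists_fin_three_coloring (f : α → α) :
    ∃ c : α → Fin 3, ∀ a, f a ≠ a → c (f a) ≠ c a := by
  classical
  choose g hg using exists_fin_three_coloring_on f
  obtain ⟨c, hc⟩ := Finset.rado_selection g
  refine ⟨c, fun a ha => ?_⟩
  obtain ⟨t, hst, hct⟩ := hc {a, f a}
  have hat : a ∈ t := hst (by simp)
  have hfat : f a ∈ t := hst (by simp)
  rw [hct a (by simp), hct (f a) (by simp)]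
  exact hg t a hat hfat ha

theorem exists_fin_three_cover {E : ι → Set β} (hE : Pairwise (Disjoint on E))
    {q : ι → Ultrafilter β} (hq : ∀ i, E i ∉ q i)
    (hqE : ∀ i, ⋃ j, E j ∈ q i → ∃ j, E j ∈ q i) :
    ∃ B : Fin 3 → Set β, ∀ i, ∃ k, E i ⊆ B k ∧ B k ∉ q i := by
  have hp (i : ι) : ∃ j, ⋃ l, E l ∈ q i → E j ∈ q i := by
    by_cases hi : ⋃ l, E l ∈ q i
    · exact (hqE i hi).imp fun _ hj _ => hj
    · exact ⟨i, fun h => absurd h hi⟩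
  choose p hp using hp
  obtain ⟨c, hc⟩ := exists_fin_three_coloring p
  refine ⟨fun k => ⋃ i ∈ c ⁻¹' {k}, E i, fun i => ⟨c i, subset_biUnion_of_mem (u := E) rfl, ?_⟩⟩
  intro hB
  have hpi : E (p i) ∈ q i := hp i (mem_of_superset hB (iUnion₂_subset_iUnion _ _))
  obtain ⟨b, hbB, hbp⟩ := Ultrafilter.nonempty_of_mem (inter_mem hB hpi)
  obtain ⟨j, hj, hbj⟩ := mem_iUnion₂.1 hbB
  obtain rfl : j = p i := hE.eq (not_disjoint_iff.2 ⟨b, hbj, hbp⟩)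
  refine hc i (fun h => hq i ?_) hj
  rwa [h] at hpi

theorem exists_selection_fin_three_cover [Countable γ] [Infinite γ]
    {E : ℕ × γ → Set β} (hE : Pairwise (Disjoint on E))
    {q : ℕ × γ → Ultrafilter β} (hq : ∀ p, E p ∉ q p) :
    ∃ (h : ℕ → γ) (B : Fin 3 → Set β), ∀ n, ∃ k, E (n, h n) ⊆ B k ∧ B k ∉ q (n, h n) := by
  obtain ⟨h, hh⟩ := exists_forall_iUnion_mem_imp_exists_mem hE q
  have hinj : Injective fun n => (n, h n) := fun _ _ hmn => congrArg Prod.fst hmn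
  exact ⟨h, exists_fin_three_cover (hE.comp_of_injective hinj) (fun n => hq (n, h n))
    fun n => hh (n, h n)⟩

end Combinatorics

section Topology

theorem exists_discreteQuotient_of_mem_nhds {X Y : Type*} [TopologicalSpace X]
    [TopologicalSpace Y] [CompactSpace Y] [T2Space Y] [TotallyDisconnectedSpace Y]
    {f : C(X, Y)} {W : Set C(X, Y)} (hW : W ∈ 𝓝 f) :
    ∃ Q : DiscreteQuotient Y, ∀ g : C(X, Y), Q.proj ∘ g = Q.proj ∘ f → g ∈ W := by
  let agree (Q : DiscreteQuotient Y) : Set C(X, Y) := {g | Q.proj ∘ g = Q.proj ∘ f}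
  have agree_mono : Monotone agree := fun P Q hPQ g hg => by
    change Q.proj ∘ g = Q.proj ∘ f
    rw [← DiscreteQuotient.ofLE_comp_proj hPQ, comp_assoc, comp_assoc, hg]
  have hle : ⨅ Q, 𝓟 (agree Q) ≤ 𝓝 f := by
    rw [ContinuousMap.nhds_compactOpen]
    refine le_iInf₂ fun K hK => le_iInf₂ fun U hU => le_iInf fun hKU => ?_
    obtain ⟨V, hV, hKV, hVU⟩ := exists_clopen_of_closed_subset_open
      (hK.image f.continuous).isClosed hU hKU.image_subset
    refine iInf_le_of_le (.ofIsClopen hV) (principal_mono.2 fun g hg x hx => hVU ?_)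
    have hrel : g x ∈ V ↔ f x ∈ V := Quotient.exact (congrFun hg x)
    exact hrel.2 (hKV (mem_image_of_mem f hx))
  obtain ⟨Q, hQ⟩ := (mem_iInf_of_directed
    (directed_of_isDirected_ge fun _ _ h => principal_mono.2 (agree_mono h)) W).1 (hle hW)
  exact ⟨Q, fun g hg => hQ hg⟩

theorem exists_forall_eventually_eq_of_continuous {X S α : Type*} [TopologicalSpace X]
    [CompactSpace X] [TopologicalSpace S] [DiscreteTopology S] [Finite S] [Nonempty S]
    {e : X → Ultrafilter α} (he : Continuous e) (he' : Injective e)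
    {k : X → S} (hk : Continuous k) :
    ∃ σ : α → S, ∀ x, ∀ᶠ a in e x, σ a = k x := by
  obtain ⟨K, hK, -, hKe⟩ := Profinite.exists_lift_of_finite_of_injective_of_surjective e he he'
    (fun _ : S => ()) (surjective_to_subsingleton _) k hk (fun _ => ()) continuous_const rfl
  refine ⟨K ∘ pure, fun x => ?_⟩
  have hlim : Tendsto (K ∘ pure) (e x) (𝓝 (k x)) :=
    congrFun hKe x ▸ (hK.tendsto (e x)).comp (Ultrafilter.tendsto_pure_self (e x))
  exact tendsto_pure.1 (nhds_discrete S ▸ hlim)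

variable {α : Type*} [TopologicalSpace α] [DiscreteTopology α]

/-- The Stone–Čech compactification of a discrete space as the space of ultrafilters on it, the
unit corresponding to principal ultrafilters. -/
noncomputable def stoneCechHomeomorphUltrafilter : StoneCech α ≃ₜ Ultrafilter α where
  toFun := stoneCechExtend (continuous_of_discreteTopology (f := pure))
  invFun := Ultrafilter.extend stoneCechUnit
  left_inv := congrFun <| denseRange_stoneCechUnit.equalizer
    ((continuous_ultrafilter_extend _).comp (continuous_stoneCechExtend _)) continuous_id <|
    funext fun a => by simp [stoneCechExtend_stoneCechUnit]
  right_inv := congrFun <| denseRange_pure.equalizer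
    ((continuous_stoneCechExtend _).comp (continuous_ultrafilter_extend _)) continuous_id <|
    funext fun a => by simp [stoneCechExtend_stoneCechUnit]
  continuous_toFun := continuous_stoneCechExtend _
  continuous_invFun := continuous_ultrafilter_extend _

theorem stoneCechHomeomorphUltrafilter_stoneCechUnit (a : α) :
    stoneCechHomeomorphUltrafilter (stoneCechUnit a) = pure a :=
  stoneCechExtend_stoneCechUnit (continuous_of_discreteTopology (f := pure)) a

theorem notMem_range_stoneCechUnit_iff {x : StoneCech α} :
    x ∉ range stoneCechUnit ↔ (stoneCechHomeomorphUltrafilter x : Filter α) ≤ cofinite := by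
  constructor
  · intro hx
    refine (Ultrafilter.le_cofinite_or_eq_pure _).resolve_right fun ⟨a, ha⟩ => hx ⟨a, ?_⟩
    rw [← stoneCechHomeomorphUltrafilter.injective.eq_iff, ha,
      stoneCechHomeomorphUltrafilter_stoneCechUnit]
  · rintro hx ⟨a, rfl⟩
    rw [stoneCechHomeomorphUltrafilter_stoneCechUnit] at hx
    exact hx (finite_singleton a).compl_mem_cofinite rfl

theorem continuous_ultrafilter_map {α β : Type*} (φ : α → β) :
    Continuous (Ultrafilter.map φ) :=
  ultrafilterBasis_is_basis.continuous_iff.2 <|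
    forall_mem_range.2 fun s => ultrafilter_isOpen_basic (φ ⁻¹' s)

theorem isClosed_setOf_ultrafilter_le_cofinite {α : Type*} :
    IsClosed {u : Ultrafilter α | (u : Filter α) ≤ cofinite} := by
  simp only [le_cofinite_iff_compl_singleton_mem, ofPred_forall]
  exact isClosed_iInter fun a => ultrafilter_isClosed_basic {a}ᶜ

theorem stoneCechHomeomorphUltrafilter_betaExtend (φ : ℕ → ℕ) (x : StoneCech ℕ) :
    stoneCechHomeomorphUltrafilter (betaExtend φ x) =
      (stoneCechHomeomorphUltrafilter x).map φ := by
  refine congrFun (denseRange_stoneCechUnit.equalizer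
    (stoneCechHomeomorphUltrafilter.continuous.comp (continuous_stoneCechExtend _))
    ((continuous_ultrafilter_map φ).comp stoneCechHomeomorphUltrafilter.continuous)
    (funext fun n => ?_)) x
  simp [stoneCechExtend_stoneCechUnit, stoneCechHomeomorphUltrafilter_stoneCechUnit]

end Topology

namespace OmegaStar

/-- The free ultrafilter on `ℕ` corresponding to a point of `ω*`. -/
noncomputable def ultrafilter (x : OmegaStar) : Ultrafilter ℕ :=
  stoneCechHomeomorphUltrafilter x.1

theorem ultrafilter_le_cofinite (x : OmegaStar) : (x.ultrafilter : Filter ℕ) ≤ cofinite :=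
  notMem_range_stoneCechUnit_iff.1 x.2

theorem range_ultrafilter :
    range ultrafilter = {u : Ultrafilter ℕ | (u : Filter ℕ) ≤ cofinite} := by
  refine (range_subset_iff.2 ultrafilter_le_cofinite).antisymm fun u hu => ?_
  obtain ⟨x, rfl⟩ := stoneCechHomeomorphUltrafilter.surjective u
  exact ⟨⟨x, notMem_range_stoneCechUnit_iff.2 hu⟩, rfl⟩

theorem isClosedEmbedding_ultrafilter : IsClosedEmbedding ultrafilter where
  toIsEmbedding := stoneCechHomeomorphUltrafilter.isEmbedding.comp .subtypeVal
  isClosed_range := range_ultrafilter ▸ isClosed_setOf_ultrafilter_le_cofinite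

instance : CompactSpace OmegaStar := isClosedEmbedding_ultrafilter.compactSpace

instance : TotallyDisconnectedSpace OmegaStar :=
  isClosedEmbedding_ultrafilter.isTotallyDisconnected_range.1
    (isTotallyDisconnected_of_totallyDisconnectedSpace _)

theorem infinite_of_mem_ultrafilter {x : OmegaStar} {A : Set ℕ} (hA : A ∈ x.ultrafilter) :
    A.Infinite :=
  frequently_cofinite_iff_infinite.1 <|
    (Eventually.frequently (f := (x.ultrafilter : Filter ℕ)) hA).filter_mono
      x.ultrafilter_le_cofinite

theorem exists_mem_ultrafilter {A : Set ℕ} (hA : A.Infinite) :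
    ∃ x : OmegaStar, A ∈ x.ultrafilter := by
  have : NeBot (cofinite ⊓ 𝓟 A) := cofinite_inf_principal_neBot_iff.2 hA
  obtain ⟨u, hu⟩ := Ultrafilter.exists_le (cofinite ⊓ 𝓟 A)
  obtain ⟨hcof, hAu⟩ := le_inf_iff.1 hu
  obtain ⟨x, rfl⟩ : u ∈ range ultrafilter := range_ultrafilter ▸ hcof
  exact ⟨x, le_principal_iff.1 hAu⟩

instance : Nonempty OmegaStar := ⟨(exists_mem_ultrafilter infinite_univ).choose⟩

/-- The basic clopen subset `A*` of `ω*` determined by `A ⊆ ℕ`. -/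
def star (A : Set ℕ) : Set OmegaStar := {x | A ∈ x.ultrafilter}

theorem isClopen_star (A : Set ℕ) : IsClopen (star A) :=
  IsClopen.preimage ⟨ultrafilter_isClosed_basic A, ultrafilter_isOpen_basic A⟩
    isClosedEmbedding_ultrafilter.continuous

theorem exists_star_subset {x : OmegaStar} {U : Set OmegaStar} (hU : U ∈ 𝓝 x) :
    ∃ A ∈ x.ultrafilter, star A ⊆ U := by
  rw [isClosedEmbedding_ultrafilter.isInducing.nhds_eq_comap,
    (ultrafilterBasis_is_basis.nhds_hasBasis.comap _).mem_iff] at hU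
  obtain ⟨_, ⟨⟨A, rfl⟩, hA⟩, hAU⟩ := hU
  exact ⟨A, hA, hAU⟩

/-- The self-map `φ*` of `ω*` induced by an injection `φ : ℕ → ℕ`, the restriction of `βφ`. -/
noncomputable def map (φ : ℕ → ℕ) (hφ : Injective φ) : C(OmegaStar, OmegaStar) where
  toFun x := ⟨betaExtend φ x.1, notMem_range_stoneCechUnit_iff.2 <| by
    rw [stoneCechHomeomorphUltrafilter_betaExtend]
    exact hφ.tendsto_cofinite.mono_left x.ultrafilter_le_cofinite⟩
  continuous_toFun :=
    ((continuous_stoneCechExtend _).comp continuous_subtype_val).subtype_mk _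

variable {φ : ℕ → ℕ}

theorem ultrafilter_map (hφ : Injective φ) (x : OmegaStar) :
    (map φ hφ x).ultrafilter = x.ultrafilter.map φ :=
  stoneCechHomeomorphUltrafilter_betaExtend φ x.1

theorem exists_map_mem_of_mem_nhds {f : C(OmegaStar, OmegaStar)} {W : Set C(OmegaStar, OmegaStar)}
    (hW : W ∈ 𝓝 f) : ∃ (φ : ℕ → ℕ) (hφ : Injective φ), map φ hφ ∈ W := by
  obtain ⟨Q, hQ⟩ := exists_discreteQuotient_of_mem_nhds hW
  have exists_coloring {k : OmegaStar → Q} (hk : Continuous k) :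
      ∃ σ : ℕ → Q, ∀ x, ∀ᶠ n in (x.ultrafilter : Filter ℕ), σ n = k x :=
    exists_forall_eventually_eq_of_continuous isClosedEmbedding_ultrafilter.continuous
      isClosedEmbedding_ultrafilter.injective hk
  obtain ⟨σ, hσ⟩ := exists_coloring (Q.proj_continuous.comp f.continuous)
  obtain ⟨τ, hτ⟩ := exists_coloring Q.proj_continuous
  have hστ (s : Q) (hs : ∃ᶠ n in cofinite, σ n = s) : ∃ᶠ n in cofinite, τ n = s := by
    obtain ⟨x, hx⟩ := exists_mem_ultrafilter (frequently_cofinite_iff_infinite.1 hs)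
    obtain ⟨n, hn, hn'⟩ := ((hσ x).and hx).exists
    obtain rfl : σ n = s := hn'
    rw [hn]
    exact frequently_cofinite_iff_infinite.2 (infinite_of_mem_ultrafilter (hτ (f x)))
  obtain ⟨φ, hφ, hτφ⟩ := exists_injective_comp_eventuallyEq hστ
  refine ⟨φ, hφ, hQ _ (funext fun x => ?_)⟩
  have hmap : ∀ᶠ n in (x.ultrafilter : Filter ℕ), τ (φ n) = Q.proj (map φ hφ x) := by
    have := hτ (map φ hφ x)
    rwa [ultrafilter_map] at this
  obtain ⟨n, hn₁, hn₂, hn₃⟩ :=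
    (hmap.and ((hτφ.filter_mono x.ultrafilter_le_cofinite).and (hσ x))).exists
  exact hn₁.symm.trans (hn₂.trans hn₃)

theorem setOf_mapsTo_star_mem_nhds_map (hφ : Injective φ) {κ : Type*} [Finite κ]
    (B : κ → Set ℕ) :
    {g : C(OmegaStar, OmegaStar) | ∀ k, MapsTo g (star (φ ⁻¹' B k)) (star (B k))} ∈
      𝓝 (map φ hφ) := by
  refine eventually_all.2 fun k => ContinuousMap.eventually_mapsTo
    (isClopen_star _).isClosed.isCompact (isClopen_star _).isOpen fun x hx => ?_
  change B k ∈ (map φ hφ x).ultrafilter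
  rwa [ultrafilter_map]

theorem exists_infinite_forall_mem_star_ne {f g : C(OmegaStar, OmegaStar)} (hfg : f ≠ g) :
    ∃ C : Set ℕ, C.Infinite ∧ ∀ x ∈ star C, f x ≠ g x := by
  obtain ⟨x, hx⟩ := DFunLike.ne_iff.1 hfg
  obtain ⟨C, hC, hsub⟩ :=
    exists_star_subset ((isOpen_ne_fun f.continuous g.continuous).mem_nhds hx)
  exact ⟨C, infinite_of_mem_ultrafilter hC, hsub⟩

theorem exists_subset_image_notMem (hφ : Injective φ) {g : OmegaStar → OmegaStar} {D : Set ℕ}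
    (hD : D.Infinite) (hg : ∀ x ∈ star D, map φ hφ x ≠ g x) :
    ∃ A ⊆ D, ∃ x ∈ star A, φ '' A ∉ (g x).ultrafilter := by
  obtain ⟨x, hx⟩ := exists_mem_ultrafilter hD
  obtain ⟨V, hVφ, hVg⟩ : ∃ V ∈ (map φ hφ x).ultrafilter, V ∉ (g x).ultrafilter := by
    by_contra! hle
    exact hg x hx (isClosedEmbedding_ultrafilter.injective (Ultrafilter.eq_of_le hle).symm)
  rw [ultrafilter_map] at hVφ
  refine ⟨D ∩ φ ⁻¹' V, inter_subset_left, x, inter_mem hx hVφ, fun hmem => hVg ?_⟩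
  exact mem_of_superset hmem (image_subset_iff.2 inter_subset_right)

theorem exists_separating_sets (hφ : Injective φ) {g : ℕ → C(OmegaStar, OmegaStar)}
    (hg : ∀ n, map φ hφ ≠ g n) :
    ∃ B : Fin 3 → Set ℕ, ∀ n, ∃ k, ¬ MapsTo (g n) (star (φ ⁻¹' B k)) (star (B k)) := by
  choose C hC hCg using fun n => exists_infinite_forall_mem_star_ne (hg n)
  obtain ⟨D, hDC, hD, hdisj⟩ :=
    exists_pairwise_disjoint_infinite_subset fun p : ℕ × ℕ => hC p.1
  choose A hAD x hxA hAx using fun p : ℕ × ℕ => exists_subset_image_notMem hφ (g := g p.1) (hD p)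
    fun x hx => hCg p.1 x (mem_of_superset hx (hDC p))
  have himage : Pairwise (Disjoint on fun p => φ '' A p) := fun p r hpr =>
    (disjoint_image_iff hφ).2 ((hdisj hpr).mono (hAD p) (hAD r))
  obtain ⟨h, B, hB⟩ := exists_selection_fin_three_cover himage hAx
  refine ⟨B, fun n => ?_⟩
  obtain ⟨k, hk, hk'⟩ := hB n
  exact ⟨k, fun hmaps => hk' (hmaps (mem_of_superset (hxA (n, h n)) (image_subset_iff.1 hk)))⟩

theorem isWeakPPoint_map (hφ : Injective φ) : IsWeakPPoint (map φ hφ) := by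
  intro S hS hmem hcl
  obtain ⟨g, rfl⟩ := hS.exists_eq_range (closure_nonempty_iff.1 ⟨_, hcl⟩)
  obtain ⟨B, hB⟩ := exists_separating_sets hφ fun n h => hmem ⟨n, h.symm⟩
  obtain ⟨_, hgB, n, rfl⟩ :=
    mem_closure_iff_nhds.1 hcl _ (setOf_mapsTo_star_mem_nhds_map hφ B)
  obtain ⟨k, hk⟩ := hB n
  exact hk (hgB k)

end OmegaStar

/-- The restrictions to `ω*` of Stone–Čech extensions of injective maps `ℕ → ℕ` form a dense
set of weak P-points in `C_k(ω*, ω*)`. -/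
theorem dense_weakPPoints :
    Dense {f : C(OmegaStar, OmegaStar) |
      ∃ φ : ℕ → ℕ, Function.Injective φ ∧
        ∀ x : OmegaStar, betaExtend φ (x : StoneCech ℕ) = (f x : StoneCech ℕ)} ∧
    ∀ f ∈ {f : C(OmegaStar, OmegaStar) |
      ∃ φ : ℕ → ℕ, Function.Injective φ ∧
        ∀ x : OmegaStar, betaExtend φ (x : StoneCech ℕ) = (f x : StoneCech ℕ)},
      IsWeakPPoint f := by
  constructor
  · refine fun f => mem_closure_iff_nhds.2 fun W hW => ?_
    obtain ⟨φ, hφ, hmem⟩ := OmegaStar.exists_map_mem_of_mem_nhds hW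
    exact ⟨OmegaStar.map φ hφ, hmem, φ, hφ, fun _ => rfl⟩
  · rintro f ⟨φ, hφ, hf⟩
    obtain rfl : f = OmegaStar.map φ hφ := ContinuousMap.ext fun x => Subtype.ext (hf x).symm
    exact OmegaStar.isWeakPPoint_map hφ
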